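/- If X is a Čech-complete Tychonoff space and C_p(X) is an Ascoli space, then X is scattered. -/

import Mathlib

open Topology Filter

abbrev Cp (X : Type*) [TopologicalSpace X] : Type _ := {f : X → ℝ // Continuous f}

def IsAscoli (Y : Type*) [TopologicalSpace Y] : Prop :=
  ∀ K : Set C(Y, ℝ), IsCompact K → Continuous fun p : Y × K => (p.2 : C(Y, ℝ)) p.1

def CechComplete (X : Type u) [TopologicalSpace X] : Prop :=
  ∃ (Y : Type u) (_ : TopologicalSpace Y) (_ : CompactSpace Y) (_ : T2Space Y)
    (e : X → Y), IsEmbedding e ∧ Dense (Set.range e) ∧ IsGδ (Set.range e)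

def IsScattered (X : Type*) [TopologicalSpace X] : Prop :=
  ∀ A : Set X, A.Nonempty → ∃ a ∈ A, ∃ U : Set X, IsOpen U ∧ U ∩ A = {a}

lemma split_step {Y : Type*} [TopologicalSpace Y] [CompactSpace Y] [T2Space Y]
    (A : Set Y) (hA : ∀ a ∈ A, ∀ U : Set Y, IsOpen U → a ∈ U → ∃ b ∈ A, b ∈ U ∧ b ≠ a)
    (G : ℕ → Set Y) (hG : ∀ n, IsOpen (G n)) (hAG : ∀ n, A ⊆ G n)
    (n : ℕ) (U : {U : Set Y // IsOpen U ∧ (U ∩ A).Nonempty}) :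
    ∃ V : Bool → {U : Set Y // IsOpen U ∧ (U ∩ A).Nonempty},
      (∀ b, closure (V b).1 ⊆ U.1 ∩ G n) ∧ Disjoint (closure (V true).1) (closure (V false).1) := by
  obtain ⟨U, hU, a, haU, haA⟩ := U
  obtain ⟨b, hbA, hbU, hba⟩ := hA a haA U hU haU
  obtain ⟨u, hau, hu, v, hbv, hv, huv⟩ := exists_open_nhds_disjoint_closure hba.symm
  have key : ∀ c ∈ A, c ∈ U → ∀ w : Set Y, IsOpen w → c ∈ w →
      ∃ V : Set Y, IsOpen V ∧ c ∈ V ∧ closure V ⊆ (U ∩ G n) ∧ closure V ⊆ closure w := by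
    intro c hcA hcU w hw hcw
    have hmem : (U ∩ G n) ∩ w ∈ 𝓝 c :=
      ((hU.inter (hG n)).inter hw).mem_nhds ⟨⟨hcU, hAG n hcA⟩, hcw⟩
    obtain ⟨t, ht, htc, hts⟩ := exists_mem_nhds_isClosed_subset hmem
    refine ⟨interior t, isOpen_interior, mem_interior_iff_mem_nhds.2 ht, ?_, ?_⟩
    · exact (closure_minimal interior_subset htc).trans (hts.trans Set.inter_subset_left)
    · exact (closure_minimal interior_subset htc).trans
        (hts.trans (Set.inter_subset_right.trans subset_closure))
  obtain ⟨V1, hV1, ha1, hs1, hc1⟩ := key a haA haU u hu hau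
  obtain ⟨V2, hV2, hb2, hs2, hc2⟩ := key b hbA hbU v hv hbv
  refine ⟨fun i => if i then ⟨V1, hV1, a, ha1, haA⟩ else ⟨V2, hV2, b, hb2, hbA⟩, ?_, ?_⟩
  · rintro (_ | _)
    · exact hs2
    · exact hs1
  · simpa using huv.mono hc1 hc2

lemma scheme {Y : Type*} [TopologicalSpace Y] [CompactSpace Y] [T2Space Y]
    (A : Set Y) (hne : A.Nonempty)
    (hA : ∀ a ∈ A, ∀ U : Set Y, IsOpen U → a ∈ U → ∃ b ∈ A, b ∈ U ∧ b ≠ a)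
    (G : ℕ → Set Y) (hG : ∀ n, IsOpen (G n)) (hAG : ∀ n, A ⊆ G n) :
    ∃ C : List Bool → Set Y, (∀ s, IsClosed (C s)) ∧ (∀ s, (C s).Nonempty) ∧
      (∀ b s, C (b :: s) ⊆ C s) ∧ (∀ b s, C (b :: s) ⊆ G s.length) ∧
      ∀ s, Disjoint (C (true :: s)) (C (false :: s)) := by
  choose V hV hd using split_step A hA G hG hAG
  let O : List Bool → {U : Set Y // IsOpen U ∧ (U ∩ A).Nonempty} := fun s =>
    List.rec ⟨Set.univ, isOpen_univ, by simpa using hne⟩ (fun b s U => V s.length U b) s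
  have hO : ∀ b s, O (b :: s) = V s.length (O s) b := fun _ _ => rfl
  refine ⟨fun s => closure (O s).1, fun s => isClosed_closure, fun s => ?_, fun b s => ?_,
    fun b s => ?_, fun s => ?_⟩
  · exact ((O s).2.2.mono Set.inter_subset_left).closure
  · beta_reduce; rw [hO]; exact (hV _ _ _).trans (Set.inter_subset_left.trans subset_closure)
  · beta_reduce; rw [hO]; exact (hV _ _ _).trans Set.inter_subset_right
  · beta_reduce; rw [hO, hO]; exact hd _ _

lemma scheme_append {Y : Type*} (C : List Bool → Set Y) (hC : ∀ b s, C (b :: s) ⊆ C s)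
    (u s : List Bool) : C (u ++ s) ⊆ C s := by
  induction u with
  | nil => exact subset_rfl
  | cons b u ih => exact (hC _ _).trans ih

lemma scheme_disj {Y : Type*} (C : List Bool → Set Y) (hC : ∀ b s, C (b :: s) ⊆ C s)
    (hd : ∀ s, Disjoint (C (true :: s)) (C (false :: s))) :
    ∀ s t : List Bool, s.length = t.length → (C s ∩ C t).Nonempty → s = t := by
  intro s
  induction s with
  | nil => intro t ht _; exact (List.length_eq_zero_iff.1 ht.symm).symm
  | cons b s ih =>
    intro t ht hne
    cases t with
    | nil => simp at ht
    | cons c t =>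
      obtain ⟨y, hy1, hy2⟩ := hne
      have hst : s = t := ih t (by simpa using ht) ⟨y, hC _ _ hy1, hC _ _ hy2⟩
      subst hst
      have h := Set.disjoint_left.1 (hd s)
      cases b <;> cases c <;> first | rfl | exact absurd hy1 (h hy2) | exact absurd hy2 (h hy1)

lemma minimal_set {Y : Type*} [TopologicalSpace Y] [CompactSpace Y] [T2Space Y]
    (C : List Bool → Set Y) (hcl : ∀ s, IsClosed (C s)) (hne : ∀ s, (C s).Nonempty) :
    ∃ E : Set Y, IsClosed E ∧ (∀ s, (E ∩ C s).Nonempty) ∧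
      ∀ E' ⊆ E, IsClosed E' → (∀ s, (E' ∩ C s).Nonempty) → E' = E := by
  obtain ⟨E, hE⟩ := zorn_superset {E : Set Y | IsClosed E ∧ ∀ s, (E ∩ C s).Nonempty} (by
    intro c hc hchain
    rcases c.eq_empty_or_nonempty with rfl | hcne
    · exact ⟨Set.univ, ⟨isClosed_univ, by simpa using hne⟩, by simp⟩
    refine ⟨⋂₀ c, ⟨isClosed_sInter fun t ht => (hc ht).1, fun s => ?_⟩,
      fun t ht => Set.sInter_subset_of_mem ht⟩
    have : Nonempty c := hcne.to_subtype
    have h := IsCompact.nonempty_iInter_of_directed_nonempty_isCompact_isClosed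
      (fun t : c => t.1 ∩ C s) ?_ (fun t => (hc t.2).2 s)
      (fun t => ((hc t.2).1.inter (hcl s)).isCompact) (fun t => (hc t.2).1.inter (hcl s))
    · obtain ⟨y, hy⟩ := h
      rw [Set.mem_iInter] at hy
      refine ⟨y, fun t ht => (hy ⟨t, ht⟩).1, (hy (Classical.arbitrary c)).2⟩
    · intro a b
      rcases hchain.total a.2 b.2 with h | h
      · exact ⟨a, subset_rfl, Set.inter_subset_inter_left _ h⟩
      · exact ⟨b, Set.inter_subset_inter_left _ h, subset_rfl⟩)
  refine ⟨E, hE.prop.1, hE.prop.2, fun E' h1 h2 h3 => ?_⟩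
  exact h1.antisymm (hE.le_of_le ⟨h2, h3⟩ h1)

lemma minimal_subset {Y : Type*} [TopologicalSpace Y] [CompactSpace Y] [T2Space Y]
    (C : List Bool → Set Y) (hcl : ∀ s, IsClosed (C s))
    (hC : ∀ b s, C (b :: s) ⊆ C s)
    (E : Set Y) (hEc : IsClosed E) (hE : ∀ s, (E ∩ C s).Nonempty)
    (hmin : ∀ E' ⊆ E, IsClosed E' → (∀ s, (E' ∩ C s).Nonempty) → E' = E) (n : ℕ) :
    ∀ y ∈ E, ∃ s : List Bool, s.length = n ∧ y ∈ C s := by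
  have hfin : {s : List Bool | s.length = n}.Finite := List.finite_length_eq Bool n
  have h := hmin (E ∩ ⋃ s ∈ {s : List Bool | s.length = n}, C s) Set.inter_subset_left
    (hEc.inter (hfin.isClosed_biUnion fun s _ => hcl s)) ?_
  · intro y hy
    rw [← h] at hy
    simpa using hy.2
  · intro t
    rcases le_total t.length n with htn | htn
    · obtain ⟨y, hyE, hy⟩ := hE (List.replicate (n - t.length) true ++ t)
      refine ⟨y, ⟨hyE, ?_⟩, scheme_append C hC _ _ hy⟩
      refine Set.mem_biUnion (x := List.replicate (n - t.length) true ++ t) ?_ hy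
      simp; omega
    · obtain ⟨y, hyE, hy⟩ := hE t
      refine ⟨y, ⟨hyE, ?_⟩, hy⟩
      refine Set.mem_biUnion (x := t.drop (t.length - n)) ?_ ?_
      · simp; omega
      · refine scheme_append C hC (t.take (t.length - n)) _ ?_
        rwa [List.take_append_drop]

open Classical in
lemma core {X : Type u} [TopologicalSpace X] (hcc : CechComplete X) (A : Set X)
    (hne : A.Nonempty) (hA : ∀ a ∈ A, ∀ U : Set X, IsOpen U → a ∈ U → ∃ b ∈ A, b ∈ U ∧ b ≠ a) :
    ∃ P : ℕ → Finset X, ∀ K : Set (Cp X), (∀ x, ∃ k : ℕ, ∀ h ∈ K, h.1 x ≤ k) →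
      ∃ k M : ℕ, ∀ m ≥ M, m < ((P m).filter (fun x => ∀ h ∈ K, h.1 x ≤ k)).card := by
  obtain ⟨Y, _, _, _, e, he, -, hGδ⟩ := hcc
  obtain ⟨G, hG, hGe⟩ := isGδ_iff_eq_iInter_nat.1 hGδ
  obtain ⟨C, hcl, hCne, hC, hCG, hd⟩ := scheme (e '' A) (hne.image e) (by
    rintro _ ⟨a, ha, rfl⟩ U hU haU
    obtain ⟨b, hb, hbU, hba⟩ := hA a ha (e ⁻¹' U) (hU.preimage he.continuous) haU
    exact ⟨e b, ⟨b, hb, rfl⟩, hbU, fun h => hba (he.injective h)⟩) G hG (by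
    rintro n _ ⟨a, -, rfl⟩
    have : e a ∈ ⋂ n, G n := hGe ▸ Set.mem_range_self a
    exact Set.mem_iInter.1 this n)
  obtain ⟨E, hEc, hE, hmin⟩ := minimal_set C hcl hCne
  have hEr : ∀ y : E, ∃ x, e x = y := by
    intro y
    have : (y : Y) ∈ Set.range e := by
      rw [hGe, Set.mem_iInter]
      intro n
      obtain ⟨s, hs, hy⟩ := minimal_subset C hcl hC E hEc hE hmin (n + 1) y y.2
      cases s with
      | nil => simp at hs
      | cons b s =>
        have := hCG b s hy
        rwa [show s.length = n by simpa using hs] at this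
    exact this
  choose g hg using hEr
  have hgc : Continuous g := by
    rw [he.isInducing.continuous_iff]
    have : e ∘ g = Subtype.val := funext hg
    rw [this]; exact continuous_subtype_val
  have hgi : Function.Injective g := fun a b h => Subtype.ext (by rw [← hg, ← hg, h])
  choose y hyE hyC using hE
  let x : List Bool → X := fun s => g ⟨y s, hyE s⟩
  have hx : ∀ s t : List Bool, s.length = t.length → x s = x t → s = t := by
    intro s t hst h
    have h1 : y s = y t := congrArg Subtype.val (hgi h)
    exact scheme_disj C hC hd s t hst ⟨y s, hyC s, h1 ▸ hyC t⟩
  refine ⟨fun m => Finset.univ.image (fun v : List.Vector Bool m => x v.1), fun K hK => ?_⟩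
  have : CompactSpace E := isCompact_iff_compactSpace.1 hEc.isCompact
  have : Nonempty E := ⟨⟨y [], hyE []⟩⟩
  obtain ⟨k, hk⟩ := nonempty_interior_of_iUnion_of_closed
    (f := fun k : ℕ => {z : E | ∀ h ∈ K, h.1 (g z) ≤ k}) (by
      intro k
      have : {z : E | ∀ h ∈ K, h.1 (g z) ≤ k} = ⋂ h ∈ K, {z : E | h.1 (g z) ≤ k} := by
        ext; simp
      rw [this]
      exact isClosed_biInter fun h _ => isClosed_le (h.2.comp hgc) continuous_const) (by
      ext z
      simpa using hK (g z))
  obtain ⟨W, hW, hWi⟩ := isOpen_induced_iff.1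
    (isOpen_interior (s := {z : E | ∀ h ∈ K, h.1 (g z) ≤ k}))
  obtain ⟨z, hz⟩ := hk
  have hzW : (z : Y) ∈ W := by rw [← hWi] at hz; exact hz
  have hs0 : ∃ s, ¬ ((E \ W) ∩ C s).Nonempty := by
    by_contra! hcon
    have h := hmin (E \ W) Set.sdiff_subset (hEc.sdiff hW) hcon
    exact (h.ge z.2).2 hzW
  obtain ⟨s0, hs0⟩ := hs0
  have hs0' : ∀ u, ∀ h ∈ K, h.1 (x (u ++ s0)) ≤ k := by
    intro u
    have h1 : y (u ++ s0) ∈ W := by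
      by_contra hcon
      exact hs0 ⟨_, ⟨hyE _, hcon⟩, scheme_append C hC _ _ (hyC (u ++ s0))⟩
    have h2 : (⟨y (u ++ s0), hyE _⟩ : E) ∈ interior {z : E | ∀ h ∈ K, h.1 (g z) ≤ k} := by
      rw [← hWi]; exact h1
    exact interior_subset h2
  refine ⟨k, 2 * s0.length + 4, fun m hm => ?_⟩
  have hcard : (Finset.univ.image
      (fun v : List.Vector Bool (m - s0.length) => x (v.1 ++ s0))).card = 2 ^ (m - s0.length) := by
    rw [Finset.card_image_of_injective]
    · simp
    · intro v w hvw
      have := hx (v.1 ++ s0) (w.1 ++ s0) (by simp [v.2, w.2]) hvw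
      exact Subtype.ext (List.append_cancel_right this)
  have hlt : m < 2 ^ (m - s0.length) := by
    have h4 : ∀ d, m - s0.length = d → m < 2 ^ d := by
      intro d hd
      obtain ⟨c, rfl⟩ : ∃ c, d = c + 1 := ⟨d - 1, by omega⟩
      have h5 : m ≤ 2 * c := by omega
      have h6 : c < 2 ^ c := Nat.lt_two_pow_self
      rw [pow_succ]; omega
    exact h4 _ rfl
  refine hlt.trans_le (hcard ▸ Finset.card_le_card ?_)
  intro p hp
  obtain ⟨v, -, rfl⟩ := Finset.mem_image.1 hp
  refine Finset.mem_filter.2 ⟨Finset.mem_image.2 ⟨⟨v.1 ++ s0, ?_⟩, Finset.mem_univ _, rfl⟩, hs0' _⟩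
  simp [v.2]; omega

lemma sep {X : Type u} [TopologicalSpace X] (hcc : CechComplete X) (F T : Finset X)
    (hFT : Disjoint F T) (r : ℝ) : ∃ h : Cp X, (∀ x ∈ F, h.1 x = 0) ∧ ∀ x ∈ T, h.1 x = r := by
  obtain ⟨Y, _, _, _, e, he, -, -⟩ := hcc
  obtain ⟨f, h0, h1, -⟩ := exists_continuous_zero_one_of_isClosed
    (s := e '' F) (t := e '' T) (F.finite_toSet.image e).isClosed (T.finite_toSet.image e).isClosed
    ((Set.disjoint_image_iff he.injective).2 (by exact_mod_cast hFT))
  refine ⟨⟨fun x => r * f (e x), by have := he.continuous; fun_prop⟩, fun x hx => ?_, fun x hx => ?_⟩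
  · simp [h0 ⟨x, hx, rfl⟩]
  · simp [h1 ⟨x, hx, rfl⟩]

/-- The test functions on `Cp X`. -/
noncomputable def testFun {X : Type*} [TopologicalSpace X] (m : ℕ) (T : Finset X) : C(Cp X, ℝ) where
  toFun h := ∏ x ∈ T, max 0 (min 1 (h.1 x - m))
  continuous_toFun := by
    refine continuous_finsetProd _ fun x _ => ?_
    have : Continuous fun h : Cp X => h.1 x := (continuous_apply x).comp continuous_subtype_val
    exact continuous_const.max (continuous_const.min (this.sub continuous_const))

theorem stmt11 {X : Type u} [TopologicalSpace X] [T35Space X]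
    (hcc : CechComplete X) (hAscoli : IsAscoli (Cp X)) : IsScattered X := by
  classical
  intro A hne
  by_contra hcon
  obtain ⟨P, hP⟩ := core hcc A hne (by
    intro a ha U hU haU
    by_contra! h
    refine hcon ⟨a, ha, U, hU, ?_⟩
    ext b
    constructor
    · rintro ⟨hb1, hb2⟩; exact h b hb2 hb1
    · rintro rfl; exact ⟨haU, ha⟩)
  let I := Σ m : ℕ, {T : Finset X // T ∈ (P m).powerset.filter (fun T => (P m).card ≤ T.card + m)}
  let f : I → C(Cp X, ℝ) := fun i => testFun i.1 i.2.1
  have hlev : ∀ M : ℕ, ∀ᶠ i : I in cofinite, M ≤ i.1 := by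
    intro M
    rw [eventually_cofinite]
    refine ((Finset.range M).sigma (fun m => (Finset.univ : Finset {T : Finset X //
      T ∈ (P m).powerset.filter (fun T => (P m).card ≤ T.card + m)}))).finite_toSet.subset ?_
    intro i hi
    have hi' : ¬ M ≤ i.1 := hi
    simpa using hi'
  have hlim : Tendsto f cofinite (𝓝 0) := by
    rw [ContinuousMap.tendsto_iff_forall_isCompact_tendstoUniformlyOn]
    intro K hK
    obtain ⟨k, M, hkM⟩ := hP K (by
      intro x
      have hc : Continuous fun h : Cp X => h.1 x :=
        (continuous_apply x).comp continuous_subtype_val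
      obtain ⟨b, hb⟩ := (hK.image hc).bddAbove
      obtain ⟨k, hk⟩ := exists_nat_ge b
      exact ⟨k, fun h hh => (hb ⟨h, hh, rfl⟩).trans hk⟩)
    rw [Metric.tendstoUniformlyOn_iff]
    intro ε hε
    filter_upwards [hlev (max k M)] with i hi h hh
    obtain ⟨m, T, hT⟩ := i
    rw [Finset.mem_filter, Finset.mem_powerset] at hT
    have h1 := hkM m ((le_max_right _ _).trans hi)
    have hx : ∃ x ∈ T, h.1 x ≤ k := by
      by_contra! hcon
      have hsub : (P m).filter (fun x => ∀ h ∈ K, h.1 x ≤ k) ⊆ P m \ T := by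
        intro x hx
        rw [Finset.mem_filter] at hx
        exact Finset.mem_sdiff.2 ⟨hx.1, fun hxT => absurd (hx.2 h hh) (not_le.2 (hcon x hxT))⟩
      have h2 := Finset.card_le_card hsub
      rw [Finset.card_sdiff_of_subset hT.1] at h2
      omega
    obtain ⟨x, hxT, hxk⟩ := hx
    have hkm : (k : ℝ) ≤ m := by exact_mod_cast (le_max_left _ _).trans hi
    have : f ⟨m, T, Finset.mem_filter.2 ⟨Finset.mem_powerset.2 hT.1, hT.2⟩⟩ h = 0 := by
      refine Finset.prod_eq_zero hxT ?_
      rw [max_eq_left]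
      exact (min_le_right _ _).trans (by linarith)
    rw [this]
    simpa using hε
  have hcomp : IsCompact (insert 0 (Set.range f)) := hlim.isCompact_insert_range_of_cofinite
  have hcont := hAscoli _ hcomp
  let z : Cp X := ⟨fun _ => 0, continuous_const⟩
  let o : (insert 0 (Set.range f) : Set C(Cp X, ℝ)) := ⟨0, Set.mem_insert _ _⟩
  have hnh := (hcont.tendsto (z, o)).eventually (gt_mem_nhds (show (0 : ℝ) < 1 by norm_num))
  rw [nhds_prod_eq, eventually_prod_iff] at hnh
  obtain ⟨pa, hpa, pb, hpb, hab⟩ := hnh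
  have hfl : Tendsto (fun i => (⟨f i, Set.mem_insert_of_mem _ ⟨i, rfl⟩⟩ :
      (insert 0 (Set.range f) : Set C(Cp X, ℝ)))) cofinite (𝓝 o) :=
    tendsto_subtype_rng.2 hlim
  have hev := hfl.eventually hpb
  have hfin : Set.Finite {i : I | ¬ pb ⟨f i, Set.mem_insert_of_mem _ ⟨i, rfl⟩⟩} :=
    eventually_cofinite.1 hev
  obtain ⟨M, hM⟩ := (hfin.image (fun i : I => i.1)).bddAbove
  -- basic neighbourhood
  have hF : ∃ F : Finset X, ∀ h : Cp X, (∀ x ∈ F, h.1 x = 0) → pa h := by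
    rw [nhds_subtype_eq_comap, eventually_comap, nhds_pi, Filter.eventually_iff,
      Filter.mem_pi] at hpa
    obtain ⟨J, hJ, t, ht, hs⟩ := hpa
    refine ⟨hJ.toFinset, fun h hh => hs (a := h.1) ?_ h rfl⟩
    intro x hx
    rw [hh x (hJ.mem_toFinset.2 hx)]
    exact mem_of_mem_nhds (ht x)
  obtain ⟨F, hF⟩ := hF
  let m := max (M + 1) F.card
  have hT : P m \ F ∈ (P m).powerset.filter (fun T => (P m).card ≤ T.card + m) := by
    rw [Finset.mem_filter, Finset.mem_powerset]
    refine ⟨Finset.sdiff_subset, ?_⟩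
    have := Finset.le_card_sdiff F (P m)
    have : F.card ≤ m := le_max_right _ _
    omega
  obtain ⟨h, h0, h1⟩ := sep hcc F (P m \ F) Finset.disjoint_sdiff (m + 1)
  have hpbi : pb ⟨f ⟨m, P m \ F, hT⟩, Set.mem_insert_of_mem _ ⟨_, rfl⟩⟩ := by
    by_contra hcon
    have : m ≤ M := hM ⟨⟨m, P m \ F, hT⟩, hcon, rfl⟩
    have : M + 1 ≤ m := le_max_left _ _
    omega
  have hfinal := hab (hF h h0) hpbi
  have hone : f ⟨m, P m \ F, hT⟩ h = 1 := by
    refine Finset.prod_eq_one fun x hx => ?_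
    rw [h1 x hx]
    simp
  simp only [hone] at hfinal
  exact lt_irrefl _ hfinal
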